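/- Let Ω ⊆ ℝ³ be a bounded open set, x ∈ Ω, and σ : [0,1] → closure(Ω) a needle with tip at x, that is, a piecewise linear injective curve with σ(0) ∈ ∂Ω, σ(1) = x, and σ(t) ∈ Ω for all 0 < t < 1. Fix j ∈ {1,2,3} and set Φ(z) = ∂G/∂z_j (z − x). Let (v_n) be a sequence of functions that are harmonic on Ω (twice continuously differentiable with vanishing Laplacian on Ω) and satisfy ∫_K (v_n − Φ)² dz → 0 for every compact set K ⊆ Ω ∖ σ([0,1]). Then for every point z₀ ∈ σ((0,1]) and every open ball B centered at z₀, ∫_{B ∩ Ω} v_n² dz → +∞ as n → ∞. (Proposition 3.1(b), stated with the defining properties of a needle sequence as hypotheses.) -/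

import Mathlib

open MeasureTheory Filter
open scoped ENNReal Topology

noncomputable section

/-- A curve `σ : ℝ → ℝ³` is piecewise linear (on `[0,1]`): there is a partition
`0 = t₀ < t₁ < ⋯ < t_m = 1` such that `σ` is affine on each subinterval. -/
def PiecewiseLinear (σ : ℝ → EuclideanSpace ℝ (Fin 3)) : Prop :=
  ∃ (m : ℕ) (t : Fin (m + 1) → ℝ), StrictMono t ∧ t 0 = 0 ∧ t (Fin.last m) = 1 ∧
    ∀ i : Fin m, ∀ u ∈ Set.Icc (t i.castSucc) (t i.succ),
      σ u = σ (t i.castSucc) +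
        ((u - t i.castSucc) / (t i.succ - t i.castSucc)) •
          (σ (t i.succ) - σ (t i.castSucc))

/-- A needle with tip at `x ∈ Ω`: a piecewise linear injective curve
`σ : [0,1] → closure Ω` with `σ(0) ∈ ∂Ω`, `σ(1) = x` and `σ(t) ∈ Ω` for `0 < t < 1`. -/
def IsNeedle (Ω : Set (EuclideanSpace ℝ (Fin 3))) (x : EuclideanSpace ℝ (Fin 3))
    (σ : ℝ → EuclideanSpace ℝ (Fin 3)) : Prop :=
  PiecewiseLinear σ ∧ Set.InjOn σ (Set.Icc 0 1) ∧
    (∀ t ∈ Set.Icc (0 : ℝ) 1, σ t ∈ closure Ω) ∧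
    σ 0 ∈ frontier Ω ∧ σ 1 = x ∧ ∀ t ∈ Set.Ioo (0 : ℝ) 1, σ t ∈ Ω

/-- A function is harmonic on an open set `Ω ⊆ ℝ³` if it is twice continuously
differentiable there and its Laplacian vanishes on `Ω`. -/
def HarmonicOnSet (v : EuclideanSpace ℝ (Fin 3) → ℝ)
    (Ω : Set (EuclideanSpace ℝ (Fin 3))) : Prop :=
  ContDiffOn ℝ 2 v Ω ∧ ∀ z ∈ Ω,
    (∑ i : Fin 3,
      fderiv ℝ (fun w => fderiv ℝ v w (EuclideanSpace.single i 1)) z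
        (EuclideanSpace.single i 1)) = 0

/-! By Green's identity, every function harmonic on `Ω` is orthogonal to `Δ ψ` for each test
function `ψ` supported in `Ω`. The dipole `Φ` is not: its Laplacian is a derivative of a Dirac mass
at the tip `x`, so it pairs to a nonzero number with `Δ ψ` when `ψ z = ⟪e, z - x⟫` near `x`, where
`e` is the moment of `Φ`. This is seen by letting `R → 0` in the smoothed dipole, which has
`(‖z - x‖² + R²)^(-d/2)` in place of `‖z - x‖^(-d)` in dimension `d`.

The needle through `z₀` consists of a tip part `C` and a base part `T` which meet only at `z₀`. Let
`ψ` be `⟪e, · - x⟫` times a cutoff that is `1` near `C` and vanishes near the part of `T`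
outside `B`. Then `Δ ψ` vanishes near `C`, so its support meets the needle only inside `B`. Away
from an arbitrarily thin neighbourhood `U ⊆ B` of that intersection `v n` tends to `Φ` in `L²`, so
the missing mass of the pairing `∫ v n * Δ ψ = 0` is carried by `U`. As `∫_U (Δ ψ)²` is as small as
we like, Cauchy–Schwarz forces `∫_U (v n)²` to be large. -/

open InnerProductSpace Module
open scoped Laplacian RealInnerProductSpace

section L2

variable {α ι : Type*} [MeasurableSpace α] {μ : Measure α}

theorem sq_integral_mul_le {f g : α → ℝ} (hf : MemLp f 2 μ) (hg : MemLp g 2 μ) :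
    (∫ z, f z * g z ∂μ) ^ 2 ≤ (∫ z, f z ^ 2 ∂μ) * ∫ z, g z ^ 2 ∂μ := by
  have inner_eq {a b : α → ℝ} (ha : MemLp a 2 μ) (hb : MemLp b 2 μ) :
      ⟪ha.toLp a, hb.toLp b⟫ = ∫ z, b z * a z ∂μ :=
    (L2.inner_def _ _).trans <| integral_congr_ae <| by
      filter_upwards [ha.coeFn_toLp, hb.coeFn_toLp] with z haz hbz
      simp [haz, hbz]
  have := real_inner_mul_inner_self_le (hg.toLp g) (hf.toLp f)
  simpa only [inner_eq, ← pow_two, mul_comm (∫ z, g z ^ 2 ∂μ)] using this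

theorem tendsto_integral_mul_of_tendsto_integral_sq_sub {l : Filter ι} {v : ι → α → ℝ}
    {Φ g : α → ℝ} (hv : ∀ n, MemLp (v n) 2 μ) (hΦ : MemLp Φ 2 μ) (hg : MemLp g 2 μ)
    (hlim : Tendsto (fun n ↦ ∫ z, (v n z - Φ z) ^ 2 ∂μ) l (𝓝 0)) :
    Tendsto (fun n ↦ ∫ z, v n z * g z ∂μ) l (𝓝 (∫ z, Φ z * g z ∂μ)) := by
  rw [tendsto_iff_dist_tendsto_zero]
  refine squeeze_zero (fun _ ↦ dist_nonneg) (fun n ↦ ?_)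
    (by simpa using (hlim.mul_const (∫ z, g z ^ 2 ∂μ)).sqrt)
  have integral_sub_mul : ∫ z, (v n z - Φ z) * g z ∂μ =
      (∫ z, v n z * g z ∂μ) - ∫ z, Φ z * g z ∂μ := by
    simp only [sub_mul]
    exact integral_sub ((hv n).integrable_mul hg) (hΦ.integrable_mul hg)
  rw [Real.dist_eq, ← integral_sub_mul]
  exact Real.abs_le_sqrt (sq_integral_mul_le ((hv n).sub hΦ) hg)

theorem exists_isOpen_between_tendsto_measure_zero [TopologicalSpace α] [OpensMeasurableSpace α]
    [μ.OuterRegular] {N B : Set α} (hNB : N ⊆ B) (hB : IsOpen B) (hN : μ N = 0) :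
    ∃ U : ℕ → Set α, (∀ k, IsOpen (U k) ∧ N ⊆ U k ∧ U k ⊆ B) ∧
      Tendsto (fun k ↦ μ (U k)) atTop (𝓝 0) := by
  have exists_cover (k : ℕ) : ∃ U, N ⊆ U ∧ IsOpen U ∧ μ U < (k : ℝ≥0∞)⁻¹ :=
    N.exists_isOpen_lt_of_lt _ (by simp [hN])
  choose U hNU hU hUk using exists_cover
  exact ⟨fun k ↦ U k ∩ B,
    fun k ↦ ⟨(hU k).inter hB, Set.subset_inter (hNU k) hNB, Set.inter_subset_right⟩,
    tendsto_of_tendsto_of_tendsto_of_le_of_le tendsto_const_nhds ENNReal.tendsto_inv_nat_nhds_zero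
      (fun _ ↦ zero_le) fun k ↦ (measure_mono Set.inter_subset_left).trans (hUk k).le⟩

theorem exists_isOpen_between_mul_setIntegral_lt_sq [TopologicalSpace α] [OpensMeasurableSpace α]
    [μ.OuterRegular] {S N B : Set α} {f q : α → ℝ} (hNB : N ⊆ B) (hB : IsOpen B) (hN : μ N = 0)
    (hf : IntegrableOn f S μ) (hq : IntegrableOn q S μ) (hf0 : ∫ z in S, f z ∂μ ≠ 0) (M : ℝ) :
    ∃ U, IsOpen U ∧ N ⊆ U ∧ U ⊆ B ∧ M * ∫ z in S ∩ U, q z ∂μ < (∫ z in S \ U, f z ∂μ) ^ 2 := by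
  obtain ⟨U, hU, hμU⟩ := exists_isOpen_between_tendsto_measure_zero hNB hB hN
  have tendsto_inter {h : α → ℝ} (hh : IntegrableOn h S μ) :
      Tendsto (fun k ↦ ∫ z in S ∩ U k, h z ∂μ) atTop (𝓝 0) := by
    have hμS : Tendsto (μ.restrict S ∘ U) atTop (𝓝 0) :=
      tendsto_of_tendsto_of_tendsto_of_le_of_le tendsto_const_nhds hμU (fun _ ↦ zero_le)
        fun k ↦ Measure.restrict_le_self _
    simpa only [Measure.restrict_restrict (hU _).1.measurableSet, Set.inter_comm] using
      Integrable.tendsto_setIntegral_nhds_zero hh hμS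
  have integral_diff_eq (k : ℕ) :
      ∫ z in S \ U k, f z ∂μ = (∫ z in S, f z ∂μ) - ∫ z in S ∩ U k, f z ∂μ :=
    eq_sub_of_add_eq' (integral_inter_add_sdiff (hU k).1.measurableSet hf)
  have tendsto_diff : Tendsto (fun k ↦ ∫ z in S \ U k, f z ∂μ) atTop (𝓝 (∫ z in S, f z ∂μ)) := by
    simpa only [integral_diff_eq, sub_zero] using
      (tendsto_inter hf).const_sub (∫ z in S, f z ∂μ)
  obtain ⟨k, hk⟩ := (((tendsto_inter hq).const_mul M).eventually_lt (tendsto_diff.pow 2)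
    (by rw [mul_zero]; positivity)).exists
  exact ⟨U k, (hU k).1, (hU k).2.1, (hU k).2.2, hk⟩

theorem memLp_two_restrict_of_continuousOn [TopologicalSpace α] [T2Space α]
    [OpensMeasurableSpace α] [IsFiniteMeasureOnCompacts μ] {S : Set α} {f : α → ℝ}
    (hS : IsCompact S) (hf : ContinuousOn f S) : MemLp f 2 (μ.restrict S) :=
  (memLp_two_iff_integrable_sq (hf.integrableOn_compact hS).aestronglyMeasurable).mpr
    ((hf.pow 2).integrableOn_compact hS)

theorem lt_setIntegral_sq_of_setIntegral_mul_eq_zero {S U : Set α} {v g : α → ℝ}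
    (hU : MeasurableSet U) (hv : MemLp v 2 (μ.restrict S)) (hg : MemLp g 2 (μ.restrict S))
    (hvg : ∫ z in S, v z * g z ∂μ = 0) {M : ℝ}
    (hM : M * ∫ z in S ∩ U, g z ^ 2 ∂μ < (∫ z in S \ U, v z * g z ∂μ) ^ 2) :
    M < ∫ z in S ∩ U, v z ^ 2 ∂μ := by
  have memLp_near {f : α → ℝ} (hf : MemLp f 2 (μ.restrict S)) : MemLp f 2 (μ.restrict (S ∩ U)) :=
    hf.mono_measure (Measure.restrict_mono_set μ Set.inter_subset_left)
  have integral_diff_eq : ∫ z in S \ U, v z * g z ∂μ = -∫ z in S ∩ U, v z * g z ∂μ :=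
    eq_neg_of_add_eq_zero_right
      ((integral_inter_add_sdiff hU (hv.integrable_mul hg)).trans hvg)
  rw [integral_diff_eq, neg_sq] at hM
  exact lt_of_mul_lt_mul_right (hM.trans_le (sq_integral_mul_le (memLp_near hv) (memLp_near hg)))
    (integral_nonneg fun z ↦ sq_nonneg _)

theorem tendsto_setLIntegral_sq_nhds_top [TopologicalSpace α] [T2Space α] [OpensMeasurableSpace α]
    [μ.OuterRegular] [IsFiniteMeasureOnCompacts μ] {l : Filter ι} {S N B : Set α}
    {v : ι → α → ℝ} {Φ g : α → ℝ} (hS : IsCompact S) (hN : μ N = 0) (hB : IsOpen B)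
    (hSNB : S ∩ N ⊆ B) (hv : ∀ n, ContinuousOn (v n) S) (hΦ : ContinuousOn Φ S)
    (hg : ContinuousOn g S) (hvg : ∀ n, ∫ z in S, v n z * g z ∂μ = 0)
    (hΦg : ∫ z in S, Φ z * g z ∂μ ≠ 0)
    (hlim : ∀ K ⊆ S \ N, IsCompact K →
      Tendsto (fun n ↦ ∫ z in K, (v n z - Φ z) ^ 2 ∂μ) l (𝓝 0)) :
    Tendsto (fun n ↦ ∫⁻ z in S ∩ B, ENNReal.ofReal (v n z ^ 2) ∂μ) l (𝓝 ⊤) := by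
  rw [ENNReal.tendsto_nhds_top_iff_nnreal]
  intro M
  obtain ⟨U, hU, hNU, hUB, hM⟩ := exists_isOpen_between_mul_setIntegral_lt_sq hSNB hB
    (measure_mono_null Set.inter_subset_right hN) ((hΦ.mul hg).integrableOn_compact hS)
    ((hg.pow 2).integrableOn_compact hS) hΦg M
  have memLp {f : α → ℝ} (hf : ContinuousOn f S) {A : Set α} (hA : A ⊆ S) :
      MemLp f 2 (μ.restrict A) :=
    (memLp_two_restrict_of_continuousOn hS hf).mono_measure (Measure.restrict_mono_set μ hA)
  have hSU : S \ U ⊆ S := Set.sdiff_subset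
  have tendsto_off_U := tendsto_integral_mul_of_tendsto_integral_sq_sub
    (fun n ↦ memLp (hv n) hSU) (memLp hΦ hSU) (memLp hg hSU)
    (hlim _ (fun z hz ↦ ⟨hz.1, fun hzN ↦ hz.2 (hNU ⟨hz.1, hzN⟩)⟩) (hS.diff hU))
  filter_upwards [(tendsto_off_U.pow 2).eventually (lt_mem_nhds hM)] with n hn
  have lt_near := lt_setIntegral_sq_of_setIntegral_mul_eq_zero hU.measurableSet
    (memLp (hv n) subset_rfl) (memLp hg subset_rfl) (hvg n) hn
  calc (M : ℝ≥0∞) < ENNReal.ofReal (∫ z in S ∩ U, v n z ^ 2 ∂μ) := by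
        rwa [← ENNReal.ofReal_coe_nnreal, ENNReal.ofReal_lt_ofReal_iff_of_nonneg M.coe_nonneg]
    _ = ∫⁻ z in S ∩ U, ENNReal.ofReal (v n z ^ 2) ∂μ :=
        ofReal_integral_eq_lintegral_ofReal (memLp (hv n) Set.inter_subset_left).integrable_sq
          (ae_of_all _ fun z ↦ sq_nonneg _)
    _ ≤ ∫⁻ z in S ∩ B, ENNReal.ofReal (v n z ^ 2) ∂μ :=
        lintegral_mono_set (Set.inter_subset_inter_right S hUB)

theorem integrable_mul_of_tsupport_subset [TopologicalSpace α] [T2Space α] [OpensMeasurableSpace α]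
    [IsFiniteMeasureOnCompacts μ] {a b : α → ℝ} {V : Set α}
    (hV : IsOpen V) (ha : ContinuousOn a V) (hb : ContinuousOn b V) (hbc : HasCompactSupport b)
    (hbV : tsupport b ⊆ V) : Integrable (fun z ↦ a z * b z) μ :=
  ((ha.mul hb).continuous_of_tsupport_subset hV
    (tsupport_mul_subset_right.trans hbV)).integrable_of_hasCompactSupport hbc.mul_left

end L2

theorem contDiffOn_fderiv_apply {E : Type*} [NormedAddCommGroup E] [NormedSpace ℝ E] {f : E → ℝ}
    {V : Set E} {m n : WithTop ℕ∞} (hV : IsOpen V)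
    (hf : ContDiffOn ℝ n f V) (hmn : m + 1 ≤ n) (e : E) :
    ContDiffOn ℝ m (fun z ↦ fderiv ℝ f z e) V :=
  (hf.fderiv_of_isOpen hV hmn).clm_apply contDiffOn_const

theorem integral_mul_fderiv_apply_eq_neg {E : Type*} [NormedAddCommGroup E] [NormedSpace ℝ E]
    [FiniteDimensional ℝ E] [MeasurableSpace E] [BorelSpace E] {μ : Measure E}
    [μ.IsAddHaarMeasure] {u ψ : E → ℝ} {V : Set E} (hV : IsOpen V)
    (hu : ContDiffOn ℝ 1 u V) (hψ : ContDiff ℝ 1 ψ) (hψc : HasCompactSupport ψ)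
    (hψV : tsupport ψ ⊆ V) (e : E) :
    ∫ z, u z * fderiv ℝ ψ z e ∂μ = -∫ z, fderiv ℝ u z e * ψ z ∂μ := by
  have hu' : ContinuousOn (fun z ↦ fderiv ℝ u z e) V :=
    (contDiffOn_fderiv_apply (m := 0) hV hu (by norm_num) e).continuousOn
  have hψ' : Continuous fun z ↦ fderiv ℝ ψ z e :=
    (hψ.continuous_fderiv (by norm_num)).clm_apply continuous_const
  exact integral_mul_fderiv_eq_neg_fderiv_mul_of_integrable
    (integrable_mul_of_tsupport_subset hV hu' hψ.continuous.continuousOn hψc hψV)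
    (integrable_mul_of_tsupport_subset hV hu.continuousOn hψ'.continuousOn
      (hψc.fderiv_apply ℝ e) ((tsupport_fderiv_apply_subset ℝ e).trans hψV))
    (integrable_mul_of_tsupport_subset hV hu.continuousOn hψ.continuous.continuousOn hψc hψV)
    (fun z hz ↦ (hu.contDiffAt (hV.mem_nhds (hψV hz))).differentiableAt (by norm_num))
    (fun z _ ↦ hψ.differentiable (by norm_num) z)

section Laplacian

variable {E : Type*} [NormedAddCommGroup E] [InnerProductSpace ℝ E] [FiniteDimensional ℝ E]

theorem laplacian_eq_sum_fderiv_fderiv_apply {ι : Type*} [Fintype ι] (b : OrthonormalBasis ι ℝ E)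
    {f : E → ℝ} {z : E} (hf : ContDiffAt ℝ 2 f z) :
    Δ f z = ∑ i, fderiv ℝ (fun w ↦ fderiv ℝ f w (b i)) z (b i) := by
  have hf' : DifferentiableAt ℝ (fderiv ℝ f) z :=
    (hf.fderiv_right (m := 1) (by norm_num)).differentiableAt (by norm_num)
  rw [laplacian_eq_iteratedFDeriv_orthonormalBasis f b]
  refine Finset.sum_congr rfl fun i _ ↦ ?_
  simp [iteratedFDeriv_two_apply, fderiv_clm_apply hf' (differentiableAt_const _)]

theorem continuousOn_laplacian {f : E → ℝ} {V : Set E} (hV : IsOpen V) (hf : ContDiffOn ℝ 2 f V) :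
    ContinuousOn (Δ f) V := by
  let b := stdOrthonormalBasis ℝ E
  refine ContinuousOn.congr (continuousOn_finsetSum _ fun i _ ↦ ?_) fun z hz ↦
    laplacian_eq_sum_fderiv_fderiv_apply b (hf.contDiffAt (hV.mem_nhds hz))
  exact (contDiffOn_fderiv_apply (m := 0) hV
    (contDiffOn_fderiv_apply (m := 1) hV hf (by norm_num) (b i)) (by norm_num) (b i)).continuousOn

theorem tsupport_laplacian_subset (f : E → ℝ) : tsupport (Δ f) ⊆ tsupport f := by
  refine closure_minimal (fun z hz ↦ ?_) (isClosed_tsupport f)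
  contrapose! hz
  have : Δ f z = Δ (fun _ : E ↦ (0 : ℝ)) z :=
    (laplacian_congr_nhds (notMem_tsupport_iff_eventuallyEq.mp hz)).eq_of_nhds
  simpa [laplacian_const] using this

variable [MeasurableSpace E] [BorelSpace E] {μ : Measure E} [μ.IsAddHaarMeasure]

theorem integral_mul_laplacian_eq {u ψ : E → ℝ} {V : Set E} (hV : IsOpen V)
    (hu : ContDiffOn ℝ 2 u V) (hψ : ContDiff ℝ 2 ψ) (hψc : HasCompactSupport ψ)
    (hψV : tsupport ψ ⊆ V) :
    ∫ z, u z * Δ ψ z ∂μ = ∫ z, Δ u z * ψ z ∂μ := by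
  let b := stdOrthonormalBasis ℝ E
  have hu' (i) : ContDiffOn ℝ 1 (fun z ↦ fderiv ℝ u z (b i)) V :=
    contDiffOn_fderiv_apply hV hu (by norm_num) (b i)
  have hψ' (i) : ContDiff ℝ 1 (fun z ↦ fderiv ℝ ψ z (b i)) :=
    (hψ.fderiv_right (by norm_num)).clm_apply contDiff_const
  have hψ'V (i) : tsupport (fun z ↦ fderiv ℝ ψ z (b i)) ⊆ V :=
    (tsupport_fderiv_apply_subset ℝ (b i)).trans hψV
  have integral_eq (i) : ∫ z, u z * fderiv ℝ (fun w ↦ fderiv ℝ ψ w (b i)) z (b i) ∂μ =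
      ∫ z, fderiv ℝ (fun w ↦ fderiv ℝ u w (b i)) z (b i) * ψ z ∂μ := by
    rw [integral_mul_fderiv_apply_eq_neg hV (hu.of_le (by norm_num)) (hψ' i)
      (hψc.fderiv_apply ℝ (b i)) (hψ'V i), integral_mul_fderiv_apply_eq_neg hV (hu' i)
      (hψ.of_le (by norm_num)) hψc hψV, neg_neg]
  calc ∫ z, u z * Δ ψ z ∂μ
      = ∑ i, ∫ z, u z * fderiv ℝ (fun w ↦ fderiv ℝ ψ w (b i)) z (b i) ∂μ := by
        simp_rw [laplacian_eq_sum_fderiv_fderiv_apply b hψ.contDiffAt, Finset.mul_sum]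
        refine integral_finsetSum _ fun i _ ↦ ?_
        exact integrable_mul_of_tsupport_subset hV hu.continuousOn
          (((hψ' i).continuous_fderiv (by norm_num)).clm_apply continuous_const).continuousOn
          ((hψc.fderiv_apply ℝ (b i)).fderiv_apply ℝ (b i))
          ((tsupport_fderiv_apply_subset ℝ (b i)).trans (hψ'V i))
    _ = ∑ i, ∫ z, fderiv ℝ (fun w ↦ fderiv ℝ u w (b i)) z (b i) * ψ z ∂μ :=
        Finset.sum_congr rfl fun i _ ↦ integral_eq i
    _ = ∫ z, ∑ i, fderiv ℝ (fun w ↦ fderiv ℝ u w (b i)) z (b i) * ψ z ∂μ := by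
        refine (integral_finsetSum _ fun i _ ↦ ?_).symm
        exact integrable_mul_of_tsupport_subset hV
          (contDiffOn_fderiv_apply (m := 0) hV (hu' i) (by norm_num) (b i)).continuousOn
          hψ.continuous.continuousOn hψc hψV
    _ = ∫ z, Δ u z * ψ z ∂μ := by
        refine integral_congr_ae (ae_of_all _ fun z ↦ ?_)
        by_cases hz : z ∈ tsupport ψ
        · simp only [laplacian_eq_sum_fderiv_fderiv_apply b
            (hu.contDiffAt (hV.mem_nhds (hψV hz))), Finset.sum_mul]
        · simp [image_eq_zero_of_notMem_tsupport hz]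

theorem integral_harmonic_mul_laplacian_eq_zero {u ψ : E → ℝ} {V : Set E} (hV : IsOpen V)
    (hu : HarmonicOnNhd u V) (hψ : ContDiff ℝ 2 ψ) (hψc : HasCompactSupport ψ)
    (hψV : tsupport ψ ⊆ V) : ∫ z, u z * Δ ψ z ∂μ = 0 := by
  rw [integral_mul_laplacian_eq hV hu.contDiffOn hψ hψc hψV]
  refine integral_eq_zero_of_ae (ae_of_all _ fun z ↦ ?_)
  by_cases hz : z ∈ tsupport ψ
  · simp [(hu z (hψV hz)).2.eq_of_nhds]
  · simp [image_eq_zero_of_notMem_tsupport hz]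

end Laplacian

section Dipole

variable {E : Type*} [NormedAddCommGroup E] [InnerProductSpace ℝ E]

theorem hasFDerivAt_comp_norm_sub_sq {f : ℝ → ℝ} {f' : ℝ} {x z : E}
    (hf : HasDerivAt f f' (‖z - x‖ ^ 2)) :
    HasFDerivAt (fun y ↦ f (‖y - x‖ ^ 2)) (f' • (2 : ℝ) • innerSL ℝ (z - x)) z := by
  have norm_sq : HasFDerivAt (fun y ↦ ‖y - x‖ ^ 2) ((2 : ℝ) • innerSL ℝ (z - x)) z := by
    have := ((hasFDerivAt_id z).sub_const x).norm_sq
    rw [← Nat.cast_smul_eq_nsmul ℝ] at this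
    simpa using this
  exact hf.comp_hasFDerivAt z norm_sq

theorem hasFDerivAt_inner_sub (e x z : E) :
    HasFDerivAt (fun y ↦ ⟪e, y - x⟫) (innerSL ℝ e) z :=
  (innerSL ℝ e).hasFDerivAt.comp z ((hasFDerivAt_id z).sub_const x)

theorem contDiff_inner_sub {n : WithTop ℕ∞} (e x : E) : ContDiff ℝ n fun y ↦ ⟪e, y - x⟫ :=
  contDiff_const.inner ℝ (contDiff_id.sub contDiff_const)

theorem contDiff_norm_sub_sq {n : WithTop ℕ∞} (x : E) : ContDiff ℝ n fun y ↦ ‖y - x‖ ^ 2 :=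
  (contDiff_id.sub contDiff_const).norm_sq ℝ

theorem differentiableAt_deriv_of_contDiffAt {f : ℝ → ℝ} {t : ℝ} (hf : ContDiffAt ℝ 2 f t) :
    DifferentiableAt ℝ (deriv f) t :=
  ((hf.fderiv_right (m := 1) (by norm_num)).clm_apply contDiffAt_const).differentiableAt
    (by norm_num)

theorem setIntegral_ball_le_integral_mul_comp [MeasurableSpace E] [BorelSpace E]
    {μ : Measure E} [IsFiniteMeasureOnCompacts μ] {χ k : E → ℝ} {x : E} {R : ℝ}
    (hR : 0 < R) (hk : Continuous k) (hk0 : 0 ≤ k) (hχ : Continuous χ) (hχc : HasCompactSupport χ)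
    (hχ0 : 0 ≤ χ) (hχ1 : ∀ z ∈ Metric.ball x R, χ z = 1) :
    ∫ y in Metric.ball 0 1, k y ∂μ ≤ ∫ y, k y * χ (x + R • y) ∂μ := by
  have hmul : Integrable (fun y ↦ k y * χ (x + R • y)) μ := by
    refine Continuous.integrable_of_hasCompactSupport (by fun_prop) (HasCompactSupport.mul_left ?_)
    exact hχc.comp_homeomorph ((Homeomorph.smulOfNeZero R hR.ne').trans (Homeomorph.addLeft x))
  calc ∫ y in Metric.ball 0 1, k y ∂μ
      = ∫ y in Metric.ball 0 1, k y * χ (x + R • y) ∂μ := by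
        refine setIntegral_congr_fun Metric.isOpen_ball.measurableSet fun y hy ↦ ?_
        have : x + R • y ∈ Metric.ball x R := by
          rw [mem_ball_zero_iff] at hy
          simpa [norm_smul, abs_of_pos hR] using mul_lt_of_lt_one_right hR hy
        simp [hχ1 _ this]
    _ ≤ ∫ y, k y * χ (x + R • y) ∂μ :=
        setIntegral_le_integral hmul (ae_of_all _ fun y ↦ mul_nonneg (hk0 y) (hχ0 _))

/-- The potential `⟪e, z - x⟫ / (‖z - x‖² + R²) ^ (d / 2)` of a dipole at `x` with moment `e`
in dimension `d`, up to normalization. The point dipole is the case `R = 0`; a positive `R`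
smooths the singularity. -/
def dipole (e x : E) (R : ℝ) (z : E) : ℝ :=
  ⟪e, z - x⟫ * (‖z - x‖ ^ 2 + R ^ 2) ^ (-(finrank ℝ E : ℝ) / 2)

theorem contDiff_dipole {n : WithTop ℕ∞} (e x : E) {R : ℝ} (hR : R ≠ 0) :
    ContDiff ℝ n (dipole e x R) :=
  (contDiff_inner_sub e x).mul <| ((contDiff_norm_sub_sq x).add contDiff_const).rpow_const_of_ne
    fun z ↦ by positivity

theorem continuousOn_dipole_zero (e x : E) : ContinuousOn (dipole e x 0) {x}ᶜ := by
  refine (contDiff_inner_sub (n := 0) e x).continuous.continuousOn.mul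
    (ContinuousOn.rpow_const (by fun_prop) fun z hz ↦ Or.inl ?_)
  have : z - x ≠ 0 := sub_ne_zero.mpr hz
  positivity

theorem abs_dipole_le_abs_dipole_zero (e x : E) (R : ℝ) (z : E) :
    |dipole e x R z| ≤ |dipole e x 0 z| := by
  obtain rfl | hz := eq_or_ne z x
  · simp [dipole]
  have : z - x ≠ 0 := sub_ne_zero.mpr hz
  have abs_dipole (R : ℝ) : |dipole e x R z| =
      |⟪e, z - x⟫| * (‖z - x‖ ^ 2 + R ^ 2) ^ (-(finrank ℝ E : ℝ) / 2) := by
    rw [dipole, abs_mul, abs_of_nonneg (Real.rpow_nonneg (by positivity) _)]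
  rw [abs_dipole, abs_dipole]
  refine mul_le_mul_of_nonneg_left (Real.rpow_le_rpow_of_nonpos (by positivity) ?_
    (div_nonpos_of_nonpos_of_nonneg (by simp) two_pos.le)) (abs_nonneg _)
  simp [sq_nonneg]

theorem continuousAt_dipole (e x z : E) : ContinuousAt (fun R ↦ dipole e x R z) 0 := by
  obtain rfl | hz := eq_or_ne z x
  · simpa [dipole] using continuousAt_const
  have : z - x ≠ 0 := sub_ne_zero.mpr hz
  exact continuousAt_const.mul
    (ContinuousAt.rpow_const (by fun_prop) (Or.inl (by positivity)))

theorem tendsto_integral_dipole_mul [MeasurableSpace E] [BorelSpace E] {μ : Measure E}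
    {g : E → ℝ} {e x : E} (hg : Continuous g)
    (hmul : Integrable (fun z ↦ dipole e x 0 z * g z) μ) :
    Tendsto (fun R ↦ ∫ z, dipole e x R z * g z ∂μ) (𝓝[>] 0)
      (𝓝 (∫ z, dipole e x 0 z * g z ∂μ)) := by
  refine tendsto_integral_filter_of_dominated_convergence (fun z ↦ ‖dipole e x 0 z * g z‖) ?_ ?_
    hmul.norm (ae_of_all _ fun z ↦ ?_)
  · filter_upwards [self_mem_nhdsWithin] with R hR
    exact ((contDiff_dipole (n := 0) e x (ne_of_gt hR)).continuous.mul hg).aestronglyMeasurable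
  · refine Eventually.of_forall fun R ↦ ae_of_all _ fun z ↦ ?_
    simpa only [norm_mul, Real.norm_eq_abs] using
      mul_le_mul_of_nonneg_right (abs_dipole_le_abs_dipole_zero e x R z) (abs_nonneg _)
  · exact ((continuousAt_dipole e x z).tendsto.mono_left nhdsWithin_le_nhds).mul_const _

theorem fderiv_inner_mul_comp_norm_sub_sq {f : ℝ → ℝ} {x z : E}
    (hf : DifferentiableAt ℝ f (‖z - x‖ ^ 2)) (e b : E) :
    fderiv ℝ (fun y ↦ ⟪e, y - x⟫ * f (‖y - x‖ ^ 2)) z b =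
      ⟪e, b⟫ * f (‖z - x‖ ^ 2) + 2 * (⟪e, z - x⟫ * (⟪b, z - x⟫ * deriv f (‖z - x‖ ^ 2))) := by
  rw [((hasFDerivAt_inner_sub e x z).fun_mul (hasFDerivAt_comp_norm_sub_sq hf.hasDerivAt)).fderiv]
  simp only [_root_.add_apply, _root_.smul_apply, innerSL_apply_apply,
    smul_eq_mul, real_inner_comm b (z - x)]
  ring

theorem fderiv_fderiv_inner_mul_comp_norm_sub_sq {f : ℝ → ℝ} {x z : E}
    (hf : ContDiffAt ℝ 2 f (‖z - x‖ ^ 2)) (e b : E) :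
    fderiv ℝ (fun w ↦ fderiv ℝ (fun y ↦ ⟪e, y - x⟫ * f (‖y - x‖ ^ 2)) w b) z b =
      4 * deriv f (‖z - x‖ ^ 2) * (⟪e, b⟫ * ⟪b, z - x⟫) +
        ⟪e, z - x⟫ * (2 * ‖b‖ ^ 2 * deriv f (‖z - x‖ ^ 2) +
          4 * deriv (deriv f) (‖z - x‖ ^ 2) * ⟪b, z - x⟫ ^ 2) := by
  have differentiableAt_near : ∀ᶠ w in 𝓝 z, DifferentiableAt ℝ f (‖w - x‖ ^ 2) :=
    (contDiff_norm_sub_sq (n := 0) x).continuous.tendsto z |>.eventually <|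
      (hf.eventually (by simp)).mono fun t ht ↦ ht.differentiableAt (by norm_num)
  have hf' := hasFDerivAt_comp_norm_sub_sq (hf.differentiableAt (by norm_num)).hasDerivAt
  have hf'' := hasFDerivAt_comp_norm_sub_sq (differentiableAt_deriv_of_contDiffAt hf).hasDerivAt
  rw [Filter.EventuallyEq.fderiv_eq (differentiableAt_near.mono fun w hw ↦
      fderiv_inner_mul_comp_norm_sub_sq hw e b),
    ((hf'.const_mul ⟪e, b⟫).fun_add (((hasFDerivAt_inner_sub e x z).fun_mul
      ((hasFDerivAt_inner_sub b x z).fun_mul hf'')).const_mul 2)).fderiv]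
  simp only [_root_.add_apply, _root_.smul_apply, innerSL_apply_apply,
    smul_eq_mul, real_inner_comm b (z - x), real_inner_self_eq_norm_sq]
  ring

variable [FiniteDimensional ℝ E]

theorem laplacian_inner_mul_comp_norm_sub_sq {f : ℝ → ℝ} {x z : E}
    (hf : ContDiffAt ℝ 2 f (‖z - x‖ ^ 2)) (e : E) :
    Δ (fun y ↦ ⟪e, y - x⟫ * f (‖y - x‖ ^ 2)) z =
      ⟪e, z - x⟫ * (4 * ‖z - x‖ ^ 2 * deriv (deriv f) (‖z - x‖ ^ 2) +
        (2 * finrank ℝ E + 4) * deriv f (‖z - x‖ ^ 2)) := by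
  let b := stdOrthonormalBasis ℝ E
  have contDiffAt_mul : ContDiffAt ℝ 2 (fun y ↦ ⟪e, y - x⟫ * f (‖y - x‖ ^ 2)) z :=
    (contDiff_inner_sub e x).contDiffAt.mul (hf.comp z (contDiff_norm_sub_sq x).contDiffAt)
  rw [laplacian_eq_sum_fderiv_fderiv_apply b contDiffAt_mul]
  simp only [fderiv_fderiv_inner_mul_comp_norm_sub_sq hf, Finset.sum_add_distrib,
    ← Finset.mul_sum, b.sum_inner_mul_inner, b.sum_sq_inner_right, b.norm_eq_one]
  simp only [one_pow, mul_one, Finset.sum_const, Finset.card_univ, Fintype.card_fin, nsmul_eq_mul]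
  ring

theorem laplacian_inner_sub (e x z : E) : Δ (fun y ↦ ⟪e, y - x⟫) z = 0 := by
  simpa using laplacian_inner_mul_comp_norm_sub_sq (x := x) (z := z)
    (contDiffAt_const (c := (1 : ℝ))) e

theorem laplacian_mul_inner_sub_eventuallyEq_zero {χ : E → ℝ} {z : E} (e x : E)
    (hχ1 : χ =ᶠ[𝓝 z] 1) : Δ (fun y ↦ χ y * ⟪e, y - x⟫) =ᶠ[𝓝 z] 0 := by
  have heq : (fun y ↦ χ y * ⟪e, y - x⟫) =ᶠ[𝓝 z] fun y ↦ ⟪e, y - x⟫ :=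
    hχ1.mono fun y hy ↦ by simp [hy]
  exact (laplacian_congr_nhds heq).trans (Eventually.of_forall (laplacian_inner_sub e x))

theorem laplacian_dipole (e x z : E) {R : ℝ} (hR : R ≠ 0) :
    Δ (dipole e x R) z = -(finrank ℝ E * (finrank ℝ E + 2)) *
      (R ^ 2 * ⟪e, z - x⟫ * (‖z - x‖ ^ 2 + R ^ 2) ^ (-(finrank ℝ E : ℝ) / 2 - 2)) := by
  set p : ℝ := -(finrank ℝ E : ℝ) / 2 with hp
  have deriv_rpow (q t : ℝ) :
      deriv (fun t ↦ (t + R ^ 2) ^ q) t = q * (t + R ^ 2) ^ (q - 1) := by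
    rw [deriv_comp_add_const (fun t ↦ t ^ q), Real.deriv_rpow_const]
  have base_pos : 0 < ‖z - x‖ ^ 2 + R ^ 2 := by positivity
  have contDiffAt_rpow : ContDiffAt ℝ 2 (fun t ↦ (t + R ^ 2) ^ p) (‖z - x‖ ^ 2) :=
    ContDiffAt.rpow_const_of_ne (by fun_prop) base_pos.ne'
  have deriv_eq : deriv (fun t ↦ (t + R ^ 2) ^ p) = fun t ↦ p * (t + R ^ 2) ^ (p - 1) :=
    funext (deriv_rpow p)
  have rpow_eq : (‖z - x‖ ^ 2 + R ^ 2) ^ (p - 1) =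
      (‖z - x‖ ^ 2 + R ^ 2) ^ (p - 2) * (‖z - x‖ ^ 2 + R ^ 2) := by
    rw [← Real.rpow_add_one base_pos.ne']; ring_nf
  have finrank_eq : (finrank ℝ E : ℝ) = -2 * p := by rw [hp]; ring
  calc Δ (dipole e x R) z
      = ⟪e, z - x⟫ * (4 * ‖z - x‖ ^ 2 * (p * ((p - 1) * (‖z - x‖ ^ 2 + R ^ 2) ^ (p - 2))) +
          (2 * finrank ℝ E + 4) * (p * (‖z - x‖ ^ 2 + R ^ 2) ^ (p - 1))) := by
        have := laplacian_inner_mul_comp_norm_sub_sq contDiffAt_rpow e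
        simp only [deriv_eq, deriv_const_mul_field, deriv_rpow] at this
        rw [show p - 1 - 1 = p - 2 by ring] at this
        exact this
    _ = _ := by rw [rpow_eq, finrank_eq]; ring

variable [MeasurableSpace E] [BorelSpace E] {μ : Measure E} [μ.IsAddHaarMeasure]

theorem integral_dipole_mul_laplacian_eq {χ : E → ℝ} {R : ℝ} (e x : E) (hR : 0 < R)
    (hχ : ContDiff ℝ 2 χ) (hχc : HasCompactSupport χ) :
    ∫ z, dipole e x R z * Δ (fun y ↦ χ y * ⟪e, y - x⟫) z ∂μ =
      -(finrank ℝ E * (finrank ℝ E + 2)) * ∫ y, ⟪e, y⟫ ^ 2 *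
        (‖y‖ ^ 2 + 1) ^ (-(finrank ℝ E : ℝ) / 2 - 2) * χ (x + R • y) ∂μ := by
  let q : ℝ := -(finrank ℝ E : ℝ) / 2 - 2
  let F (z : E) : ℝ := R ^ 2 * ⟪e, z - x⟫ ^ 2 * (‖z - x‖ ^ 2 + R ^ 2) ^ q * χ z
  have laplacian_mul (z : E) : Δ (dipole e x R) z * (χ z * ⟪e, z - x⟫) =
      -(finrank ℝ E * (finrank ℝ E + 2)) * F z := by
    rw [laplacian_dipole e x z hR.ne']; ring
  have rpow_scale (y : E) : (R ^ 2 * (‖y‖ ^ 2 + 1)) ^ q =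
      (R ^ finrank ℝ E)⁻¹ * (R ^ 4)⁻¹ * (‖y‖ ^ 2 + 1) ^ q := by
    rw [Real.mul_rpow (by positivity) (by positivity), ← Real.rpow_natCast_mul hR.le,
      ← mul_inv, ← pow_add, ← Real.rpow_natCast R (_ + 4),
      ← Real.rpow_neg hR.le]
    congr 2
    push_cast
    ring
  have scale (y : E) : F (x + R • y) =
      (R ^ finrank ℝ E)⁻¹ * (⟪e, y⟫ ^ 2 * (‖y‖ ^ 2 + 1) ^ q * χ (x + R • y)) := by
    have : R ≠ 0 := hR.ne'
    simp only [F, add_sub_cancel_left, inner_smul_right, norm_smul, mul_pow,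
      Real.norm_eq_abs, sq_abs]
    rw [show R ^ 2 * ‖y‖ ^ 2 + R ^ 2 = R ^ 2 * (‖y‖ ^ 2 + 1) by ring, rpow_scale]
    field_simp
  calc ∫ z, dipole e x R z * Δ (fun y ↦ χ y * ⟪e, y - x⟫) z ∂μ
      = ∫ z, Δ (dipole e x R) z * (χ z * ⟪e, z - x⟫) ∂μ :=
        integral_mul_laplacian_eq isOpen_univ (contDiff_dipole e x hR.ne').contDiffOn
          (hχ.mul (contDiff_inner_sub e x)) hχc.mul_right (Set.subset_univ _)
    _ = -(finrank ℝ E * (finrank ℝ E + 2)) * ∫ w, F (x + w) ∂μ := by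
        simp only [laplacian_mul, integral_const_mul, integral_add_left_eq_self F x]
    _ = _ := by
        have := Measure.integral_comp_smul μ (fun w ↦ F (x + w)) R
        rw [abs_of_pos (by positivity), smul_eq_mul] at this
        simp only [scale, integral_const_mul] at this
        rw [mul_left_cancel₀ (by positivity) this]

theorem setIntegral_ball_sq_inner_mul_rpow_pos {e : E} (he : e ≠ 0) (q : ℝ) :
    0 < ∫ y in Metric.ball 0 1, ⟪e, y⟫ ^ 2 * (‖y‖ ^ 2 + 1) ^ q ∂μ := by
  have base_pos (y : E) : 0 < ‖y‖ ^ 2 + 1 := by positivity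
  have hcont : Continuous fun y : E ↦ ⟪e, y⟫ ^ 2 * (‖y‖ ^ 2 + 1) ^ q :=
    (by fun_prop : Continuous fun y : E ↦ ⟪e, y⟫ ^ 2).mul
      (Continuous.rpow_const (by fun_prop) fun y ↦ Or.inl (base_pos y).ne')
  rw [setIntegral_pos_iff_support_of_nonneg_ae
    (ae_of_all _ fun y ↦ mul_nonneg (sq_nonneg _) (Real.rpow_nonneg (base_pos y).le _))
    ((hcont.continuousOn.integrableOn_compact (isCompact_closedBall 0 1)).mono_set
      Metric.ball_subset_closedBall)]
  refine (hcont.isOpen_support.inter Metric.isOpen_ball).measure_pos μ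
    ⟨(2 * ‖e‖)⁻¹ • e, ?_, ?_⟩
  · have : (2 * ‖e‖)⁻¹ * ‖e‖ ^ 2 ≠ 0 := by positivity
    simpa [inner_smul_right, real_inner_self_eq_norm_sq, (Real.rpow_pos_of_pos (base_pos _) _).ne']
      using this
  · have : ‖e‖ ≠ 0 := norm_ne_zero_iff.mpr he
    rw [mem_ball_zero_iff, norm_smul, norm_inv, norm_mul, norm_norm]
    field_simp
    norm_num

theorem integral_dipole_mul_laplacian_neg {χ : E → ℝ} {e x : E} (he : e ≠ 0)
    (hχ : ContDiff ℝ 2 χ) (hχc : HasCompactSupport χ) (hχ0 : 0 ≤ χ) (hχ1 : χ =ᶠ[𝓝 x] 1) :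
    ∫ z, dipole e x 0 z * Δ (fun y ↦ χ y * ⟪e, y - x⟫) z ∂μ < 0 := by
  have : Nontrivial E := ⟨e, 0, he⟩
  have hd : (0 : ℝ) < finrank ℝ E * (finrank ℝ E + 2) := by
    have : 0 < finrank ℝ E := finrank_pos
    positivity
  let ψ (y : E) : ℝ := χ y * ⟪e, y - x⟫
  have hψc : HasCompactSupport ψ := hχc.mul_right
  have hΔψ : Continuous (Δ ψ) := continuousOn_univ.mp <|
    continuousOn_laplacian isOpen_univ (hχ.mul (contDiff_inner_sub e x)).contDiffOn
  have tsupport_subset : tsupport (Δ ψ) ⊆ {x}ᶜ := Set.subset_compl_singleton_iff.mpr <|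
    notMem_tsupport_iff_eventuallyEq.mpr (laplacian_mul_inner_sub_eventuallyEq_zero e x hχ1)
  have hmul : Integrable (fun z ↦ dipole e x 0 z * Δ ψ z) μ :=
    integrable_mul_of_tsupport_subset isOpen_compl_singleton (continuousOn_dipole_zero e x)
      hΔψ.continuousOn (hψc.mono' (subset_closure.trans (tsupport_laplacian_subset ψ)))
      tsupport_subset
  let k (y : E) : ℝ := ⟪e, y⟫ ^ 2 * (‖y‖ ^ 2 + 1) ^ (-(finrank ℝ E : ℝ) / 2 - 2)
  have hk : Continuous k := (by fun_prop : Continuous fun y : E ↦ ⟪e, y⟫ ^ 2).mul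
    (Continuous.rpow_const (by fun_prop) fun y ↦ Or.inl (by positivity))
  have hk0 : 0 ≤ k := fun y ↦ mul_nonneg (sq_nonneg _) (Real.rpow_nonneg (by positivity) _)
  obtain ⟨ε, hε, hball⟩ := Metric.eventually_nhds_iff_ball.mp hχ1
  -- By scale invariance, `Δ (dipole e x R)` keeps a fixed pairing with `⟪e, · - x⟫` as `R → 0`.
  have eventually_le : ∀ᶠ R in 𝓝[>] 0, ∫ z, dipole e x R z * Δ ψ z ∂μ ≤
      -(finrank ℝ E * (finrank ℝ E + 2)) * ∫ y in Metric.ball 0 1, k y ∂μ := by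
    filter_upwards [Ioo_mem_nhdsGT hε] with R hR
    rw [integral_dipole_mul_laplacian_eq e x hR.1 hχ hχc]
    refine mul_le_mul_of_nonpos_left ?_ (neg_nonpos.mpr hd.le)
    exact setIntegral_ball_le_integral_mul_comp hR.1 hk hk0 hχ.continuous hχc hχ0
      fun z hz ↦ hball z (Metric.ball_subset_ball hR.2.le hz)
  exact (le_of_tendsto (tendsto_integral_dipole_mul hΔψ hmul) eventually_le).trans_lt
    (mul_neg_of_neg_of_pos (neg_lt_zero.mpr hd) (setIntegral_ball_sq_inner_mul_rpow_pos he _))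

theorem exists_contDiff_hasCompactSupport_eventually_eq_one {F : Type*} [NormedAddCommGroup F]
    [NormedSpace ℝ F] [FiniteDimensional ℝ F] {C W : Set F} (n : ℕ∞) (hC : IsCompact C)
    (hW : IsOpen W) (hCW : C ⊆ W) :
    ∃ χ : F → ℝ, ContDiff ℝ n χ ∧ HasCompactSupport χ ∧ tsupport χ ⊆ W ∧ 0 ≤ χ ∧
      ∀ z ∈ C, χ =ᶠ[𝓝 z] 1 := by
  obtain ⟨K, hK, hCK, hKW⟩ := exists_compact_between hC hW hCW
  obtain ⟨χ, hχ1, hχ0, hχ⟩ := exists_contMDiffMap_one_nhds_of_subset_interior (n := n)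
    (modelWithCornersSelf ℝ F) hC.isClosed hCK
  have tsupport_subset : tsupport χ ⊆ K :=
    closure_minimal (fun z hz ↦ by contrapose! hz; simpa using hχ0 z hz) hK.isClosed
  exact ⟨χ, χ.contMDiff.contDiff, hK.of_isClosed_subset (isClosed_tsupport _) tsupport_subset,
    tsupport_subset.trans hKW, fun z ↦ (hχ z).1, eventually_nhdsSet_iff_forall.mp hχ1⟩

theorem tendsto_setLIntegral_sq_of_tendsto_dipole {ι : Type*} {l : Filter ι} {Ω C T B : Set E}
    {e x : E} {v : ι → E → ℝ} (hΩ : IsOpen Ω) (hC : IsCompact C) (hCΩ : C ⊆ Ω) (hxC : x ∈ C)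
    (hT : IsClosed T) (hB : IsOpen B) (hCTB : C ∩ T ⊆ B) (hCT : μ (C ∪ T) = 0) (he : e ≠ 0)
    (hv : ∀ n, HarmonicOnNhd (v n) Ω)
    (hlim : ∀ K ⊆ Ω \ (C ∪ T), IsCompact K →
      Tendsto (fun n ↦ ∫ z in K, (v n z - dipole e x 0 z) ^ 2 ∂μ) l (𝓝 0)) :
    Tendsto (fun n ↦ ∫⁻ z in B ∩ Ω, ENNReal.ofReal (v n z ^ 2) ∂μ) l (𝓝 ⊤) := by
  obtain ⟨χ, hχ, hχc, hχW, hχ0, hχ1⟩ :=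
    exists_contDiff_hasCompactSupport_eventually_eq_one 2 hC (hΩ.sdiff (hT.sdiff hB))
      fun z hz ↦ ⟨hCΩ hz, fun hzT ↦ hzT.2 (hCTB ⟨hz, hzT.1⟩)⟩
  let ψ (z : E) : ℝ := χ z * ⟪e, z - x⟫
  let S : Set E := tsupport (Δ ψ)
  have hψ : ContDiff ℝ 2 ψ := hχ.mul (contDiff_inner_sub e x)
  have hψc : HasCompactSupport ψ := hχc.mul_right
  have hΔψ : Continuous (Δ ψ) :=
    continuousOn_univ.mp (continuousOn_laplacian isOpen_univ hψ.contDiffOn)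
  have hψW : tsupport ψ ⊆ Ω \ (T \ B) := tsupport_mul_subset_left.trans hχW
  have hSW : S ⊆ Ω \ (T \ B) := (tsupport_laplacian_subset ψ).trans hψW
  have hSΩ : S ⊆ Ω := hSW.trans Set.sdiff_subset
  have hSC {z : E} (hz : z ∈ S) : z ∉ C := fun hzC ↦ notMem_tsupport_iff_eventuallyEq.mpr
    (laplacian_mul_inner_sub_eventuallyEq_zero e x (hχ1 z hzC)) hz
  have hSB : S ∩ (C ∪ T) ⊆ B := fun z ⟨hzS, hzCT⟩ ↦
    not_not.mp fun hzB ↦ (hSW hzS).2 ⟨hzCT.resolve_left (hSC hzS), hzB⟩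
  have setIntegral_eq (u : E → ℝ) : ∫ z in S, u z * Δ ψ z ∂μ = ∫ z, u z * Δ ψ z ∂μ :=
    setIntegral_eq_integral_of_forall_compl_eq_zero fun z hz ↦ by
      rw [image_eq_zero_of_notMem_tsupport hz, mul_zero]
  have blowup := tendsto_setLIntegral_sq_nhds_top (μ := μ) (l := l)
    (hψc.of_isClosed_subset (isClosed_tsupport _) (tsupport_laplacian_subset ψ)) hCT hB hSB
    (fun n z hz ↦ (hv n z (hSΩ hz)).1.continuousAt.continuousWithinAt)
    ((continuousOn_dipole_zero e x).mono fun z hz hzx ↦ hSC hz (hzx ▸ hxC)) hΔψ.continuousOn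
    (fun n ↦ (setIntegral_eq _).trans (integral_harmonic_mul_laplacian_eq_zero hΩ (hv n) hψ hψc
      (hψW.trans Set.sdiff_subset)))
    ((setIntegral_eq _).trans_ne (integral_dipole_mul_laplacian_neg he hχ hχc hχ0 (hχ1 x hxC)).ne)
    fun K hK ↦ hlim K (hK.trans (Set.sdiff_subset_sdiff_left hSΩ))
  exact tendsto_nhds_top_mono blowup (Eventually.of_forall fun n ↦ lintegral_mono_set
    fun z hz ↦ ⟨hz.2, hSΩ hz.1⟩)

end Dipole

theorem exists_mem_Icc_castSucc_succ {α : Type*} [LinearOrder α] {m : ℕ} {t : Fin (m + 1) → α}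
    {u : α} (h0 : t 0 ≤ u) (hlast : u ≤ t (Fin.last m)) (hm : m ≠ 0) :
    ∃ i : Fin m, u ∈ Set.Icc (t i.castSucc) (t i.succ) := by
  by_contra! hnot
  have all_le (k : Fin (m + 1)) : t k ≤ u := by
    induction k using Fin.induction with
    | zero => exact h0
    | succ i ih => exact (not_le.mp fun hi ↦ hnot i ⟨ih, hi⟩).le
  obtain ⟨m, rfl⟩ := Nat.exists_eq_succ_of_ne_zero hm
  exact hnot (Fin.last m) ⟨all_le _, hlast⟩

theorem addHaar_affineSpan_pair_eq_zero {F : Type*} [NormedAddCommGroup F] [NormedSpace ℝ F]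
    [MeasurableSpace F] [BorelSpace F] [FiniteDimensional ℝ F] (μ : Measure F)
    [μ.IsAddHaarMeasure] (hF : 1 < finrank ℝ F) (a b : F) : μ (line[ℝ, a, b] : Set F) = 0 := by
  refine Measure.addHaar_affineSubspace μ _ fun htop ↦ hF.not_ge ?_
  have := collinear_iff_finrank_le_one.mp (collinear_pair ℝ a b)
  rwa [← direction_affineSpan, htop, AffineSubspace.direction_top, finrank_top] at this

namespace PiecewiseLinear

variable {σ : ℝ → EuclideanSpace ℝ (Fin 3)}

theorem exists_cover_eqOn_lineMap (hσ : PiecewiseLinear σ) :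
    ∃ (m : ℕ) (p q : Fin m → ℝ), Set.Icc 0 1 ⊆ ⋃ i, Set.Icc (p i) (q i) ∧
      ∀ i, Set.EqOn σ
        (fun u ↦ AffineMap.lineMap (σ (p i)) (σ (q i)) ((u - p i) / (q i - p i)))
        (Set.Icc (p i) (q i)) := by
  obtain ⟨m, t, -, h0, h1, hlin⟩ := hσ
  refine ⟨m, fun i ↦ t i.castSucc, fun i ↦ t i.succ, fun u hu ↦ Set.mem_iUnion.mpr ?_, ?_⟩
  · refine exists_mem_Icc_castSucc_succ (h0.trans_le hu.1) (hu.2.trans_eq h1.symm) ?_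
    rintro rfl
    exact zero_ne_one (h0.symm.trans h1)
  · intro i u hu
    simp only [hlin i u hu, AffineMap.lineMap_apply, vsub_eq_sub, vadd_eq_add, add_comm]

theorem continuousOn (hσ : PiecewiseLinear σ) : ContinuousOn σ (Set.Icc 0 1) := by
  obtain ⟨m, p, q, hcover, hline⟩ := hσ.exists_cover_eqOn_lineMap
  refine ContinuousOn.mono ?_ hcover
  refine (locallyFinite_of_finite _).continuousOn_iUnion (fun i ↦ isClosed_Icc) fun i ↦ ?_
  exact ContinuousOn.congr
    (AffineMap.lineMap_continuous.comp_continuousOn (by fun_prop)) (hline i)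

theorem volume_image_eq_zero (hσ : PiecewiseLinear σ) : volume (σ '' Set.Icc 0 1) = 0 := by
  obtain ⟨m, p, q, hcover, hline⟩ := hσ.exists_cover_eqOn_lineMap
  refine measure_mono_null ?_ (measure_iUnion_null fun i ↦
    addHaar_affineSpan_pair_eq_zero volume (by simp) (σ (p i)) (σ (q i)))
  rintro _ ⟨u, hu, rfl⟩
  obtain ⟨i, hi⟩ := Set.mem_iUnion.mp (hcover hu)
  exact Set.mem_iUnion.mpr ⟨i, hline i hi ▸ AffineMap.lineMap_mem_affineSpan_pair _ _ _⟩

end PiecewiseLinear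

theorem HarmonicOnSet.harmonicOnNhd {v : EuclideanSpace ℝ (Fin 3) → ℝ}
    {Ω : Set (EuclideanSpace ℝ (Fin 3))} (hv : HarmonicOnSet v Ω) (hΩ : IsOpen Ω) :
    HarmonicOnNhd v Ω := by
  have contDiffAt {z} (hz : z ∈ Ω) : ContDiffAt ℝ 2 v z := hv.1.contDiffAt (hΩ.mem_nhds hz)
  refine fun z hz ↦ ⟨contDiffAt hz, (hΩ.eventually_mem hz).mono fun w hw ↦ ?_⟩
  simpa [laplacian_eq_sum_fderiv_fderiv_apply (EuclideanSpace.basisFun (Fin 3) ℝ) (contDiffAt hw)]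
    using hv.2 w hw

theorem neg_apply_div_eq_dipole (x z : EuclideanSpace ℝ (Fin 3)) (j : Fin 3) :
    -((z - x) j) / (4 * Real.pi * ‖z - x‖ ^ 3) =
      dipole (EuclideanSpace.single j (-(4 * Real.pi)⁻¹)) x 0 z := by
  have rpow_eq : (‖z - x‖ ^ 2) ^ (-(3 : ℝ) / 2) = (‖z - x‖ ^ 3)⁻¹ := by
    rw [← Real.rpow_natCast_mul (norm_nonneg _), ← Real.rpow_natCast,
      ← Real.rpow_neg (norm_nonneg _)]
    norm_num
  simp only [dipole, ne_eq, OfNat.ofNat_ne_zero, not_false_eq_true, zero_pow, add_zero,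
    finrank_euclideanSpace, Fintype.card_fin, Nat.cast_ofNat, rpow_eq,
    EuclideanSpace.inner_single_left, Real.ringHom_apply]
  ring

theorem prop31b_general {E : Type*} [NormedAddCommGroup E] [InnerProductSpace ℝ E]
    [FiniteDimensional ℝ E] [MeasurableSpace E] [BorelSpace E] {μ : Measure E}
    [μ.IsAddHaarMeasure] {ι : Type*} {l : Filter ι} {Ω B : Set E} {σ : ℝ → E} {e : E} {s : ℝ}
    {v : ι → E → ℝ} (hΩ : IsOpen Ω) (hσc : ContinuousOn σ (Set.Icc 0 1))
    (hσi : Set.InjOn σ (Set.Icc 0 1)) (hσΩ : Set.MapsTo σ (Set.Ioc 0 1) Ω)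
    (hσ0 : μ (σ '' Set.Icc 0 1) = 0) (he : e ≠ 0) (hv : ∀ n, HarmonicOnNhd (v n) Ω)
    (hlim : ∀ K ⊆ Ω \ (σ '' Set.Icc 0 1), IsCompact K →
      Tendsto (fun n ↦ ∫ z in K, (v n z - dipole e (σ 1) 0 z) ^ 2 ∂μ) l (𝓝 0))
    (hs : s ∈ Set.Ioc 0 1) (hB : IsOpen B) (hsB : σ s ∈ B) :
    Tendsto (fun n ↦ ∫⁻ z in B ∩ Ω, ENNReal.ofReal (v n z ^ 2) ∂μ) l (𝓝 ⊤) := by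
  have tip_subset : Set.Icc s 1 ⊆ Set.Icc 0 1 := Set.Icc_subset_Icc_left hs.1.le
  have base_subset : Set.Icc 0 s ⊆ Set.Icc 0 1 := Set.Icc_subset_Icc_right hs.2
  have inter_eq : σ '' Set.Icc s 1 ∩ σ '' Set.Icc 0 s = {σ s} := by
    rw [← hσi.image_inter tip_subset base_subset, Set.inter_comm,
      Set.Icc_inter_Icc_eq_singleton hs.1.le hs.2, Set.image_singleton]
  have union_eq : σ '' Set.Icc s 1 ∪ σ '' Set.Icc 0 s = σ '' Set.Icc 0 1 := by
    rw [Set.union_comm, ← Set.image_union, Set.Icc_union_Icc_eq_Icc hs.1.le hs.2]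
  rw [← union_eq] at hσ0 hlim
  exact tendsto_setLIntegral_sq_of_tendsto_dipole hΩ
    (isCompact_Icc.image_of_continuousOn (hσc.mono tip_subset))
    (hσΩ.mono_left fun t ht ↦ ⟨hs.1.trans_le ht.1, ht.2⟩).image_subset
    (Set.mem_image_of_mem σ ⟨hs.2, le_rfl⟩)
    (isCompact_Icc.image_of_continuousOn (hσc.mono base_subset)).isClosed hB
    (inter_eq ▸ Set.singleton_subset_iff.mpr hsB) hσ0 he hv hlim

/-- **Proposition 3.1(b).** Let `Ω ⊆ ℝ³` be a bounded open set, `x ∈ Ω`, `σ` a needle with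
tip at `x`, `Φ(z) = ∂G/∂z_j(z − x)`, and `(v_n)` harmonic functions on `Ω` with
`∫_K (v_n − Φ)² → 0` for every compact `K ⊆ Ω ∖ σ([0,1])`. Then for every `z₀ ∈ σ((0,1])`
and every open ball `B` centered at `z₀`, `∫_{B ∩ Ω} v_n² dz → +∞`. -/
theorem prop31b (Ω : Set (EuclideanSpace ℝ (Fin 3))) (hΩo : IsOpen Ω)
    (hΩb : Bornology.IsBounded Ω)
    (x : EuclideanSpace ℝ (Fin 3)) (hx : x ∈ Ω)
    (σ : ℝ → EuclideanSpace ℝ (Fin 3)) (hσ : IsNeedle Ω x σ)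
    (j : Fin 3) (Φ : EuclideanSpace ℝ (Fin 3) → ℝ)
    (hΦ : ∀ z, Φ z = -((z - x) j) / (4 * Real.pi * ‖z - x‖ ^ 3))
    (v : ℕ → EuclideanSpace ℝ (Fin 3) → ℝ) (hharm : ∀ n, HarmonicOnSet (v n) Ω)
    (hconv : ∀ K : Set (EuclideanSpace ℝ (Fin 3)),
      K ⊆ Ω \ (σ '' Set.Icc 0 1) → IsCompact K →
      Tendsto (fun n => ∫ z in K, (v n z - Φ z) ^ 2) atTop (𝓝 0))
    (z₀ : EuclideanSpace ℝ (Fin 3)) (hz₀ : z₀ ∈ σ '' Set.Ioc 0 1)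
    (r : ℝ) (hr : 0 < r) :
    Tendsto (fun n => ∫⁻ z in Metric.ball z₀ r ∩ Ω, ENNReal.ofReal ((v n z) ^ 2))
      atTop (𝓝 ⊤) := by
  obtain ⟨hpl, hinj, -, -, rfl, hσΩ⟩ := hσ
  obtain ⟨s, hs, rfl⟩ := hz₀
  obtain rfl : Φ = _ := funext fun z ↦ (hΦ z).trans (neg_apply_div_eq_dipole (σ 1) z j)
  exact prop31b_general hΩo hpl.continuousOn hinj
    (fun t ht ↦ ht.2.lt_or_eq.elim (fun h ↦ hσΩ t ⟨ht.1, h⟩) fun h ↦ h ▸ hx)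
    hpl.volume_image_eq_zero (by simp [Real.pi_ne_zero]) (fun n ↦ (hharm n).harmonicOnNhd hΩo)
    hconv hs Metric.isOpen_ball (Metric.mem_ball_self hr)
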